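/- Let Q₀ ∈ 𝒬_D, let 𝒜 ⊆ 𝒬_D be its SL₂(ℤ)-orbit, and let Γ_{Q₀} := {γ ∈ SL₂(ℤ) : Q₀∘γ = Q₀}. Then for every set R ⊆ SL₂(ℤ) of representatives of the right cosets Γ_{Q₀}\SL₂(ℤ) and every τ ∈ ℍ: ∑_{γ∈R} j(A_{Q₀}γ, τ)^{2k−2} · φ̂((A_{Q₀}γ)τ) = C(2k−2,k−1)·π·D^{k/2}·F_{1−k,D,𝒜}(τ), the series converging absolutely. -/

import Mathlib

noncomputable section

open MeasureTheory

/-- The set of integral binary quadratic forms `[a,b,c]` of discriminant `D`. -/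
def QD (D : ℤ) : Set (ℤ × ℤ × ℤ) := {q | q.2.1 ^ 2 - 4 * q.1 * q.2.2 = D}

/-- `Q(τ,1) = a τ² + b τ + c`. -/
def Qval (q : ℤ × ℤ × ℤ) (τ : ℂ) : ℂ :=
  (q.1 : ℂ) * τ ^ 2 + (q.2.1 : ℂ) * τ + (q.2.2 : ℂ)

/-- `a|τ|² + b x + c` where `τ = x + iy`. -/
def Qell (q : ℤ × ℤ × ℤ) (τ : ℂ) : ℝ :=
  (q.1 : ℝ) * Complex.normSq τ + (q.2.1 : ℝ) * τ.re + (q.2.2 : ℝ)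

/-- `ψ(v) = (1/2) ∫₀ᵛ u^(k-3/2) (1-u)^(-1/2) du`. -/
def psi (k : ℕ) (v : ℝ) : ℝ :=
  (1 / 2) * ∫ u in (0:ℝ)..v, u ^ ((k : ℝ) - 3 / 2) * (1 - u) ^ (-(1:ℝ) / 2)

/-- real power of the integer `D`, as a complex number. -/
def Dpow (D : ℤ) (e : ℝ) : ℂ := (((D : ℝ) ^ e : ℝ) : ℂ)

/-- The summand of the series defining `F_{1-k,D}`. -/
def Fsummand (k : ℕ) (D : ℤ) (τ : ℂ) (q : ℤ × ℤ × ℤ) : ℂ :=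
  ((Real.sign (Qell q τ) : ℝ) : ℂ) * Qval q τ ^ (k - 1) *
    ((psi k ((D : ℝ) * τ.im ^ 2 / Complex.normSq (Qval q τ)) : ℝ) : ℂ)

/-- `F_{1-k,D}`. -/
def F (k : ℕ) (D : ℤ) (τ : ℂ) : ℂ :=
  (Dpow D (1 / 2 - (k : ℝ)) / (((Nat.choose (2 * k - 2) (k - 1) : ℝ) * Real.pi : ℝ) : ℂ)) *
    ∑' q : QD D, Fsummand k D τ (q : ℤ × ℤ × ℤ)

/-- `f_{k,D}`. -/
def fkD (k : ℕ) (D : ℤ) (τ : ℂ) : ℂ :=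
  (Dpow D ((k : ℝ) - 1 / 2) / (((Nat.choose (2 * k - 2) (k - 1) : ℝ) * Real.pi : ℝ) : ℂ)) *
    ∑' q : QD D, Qval (q : ℤ × ℤ × ℤ) τ ^ (-(k : ℤ))

/-- Action of `SL₂(ℤ)` on binary quadratic forms: `(Q ∘ γ)(X,Y) = Q(pX+qY, rX+sY)`. -/
def QAct (q : ℤ × ℤ × ℤ) (γ : Matrix.SpecialLinearGroup (Fin 2) ℤ) : ℤ × ℤ × ℤ :=
  (q.1 * (γ.1 0 0) ^ 2 + q.2.1 * (γ.1 0 0) * (γ.1 1 0) + q.2.2 * (γ.1 1 0) ^ 2,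
   2 * q.1 * (γ.1 0 0) * (γ.1 0 1) + q.2.1 * ((γ.1 0 0) * (γ.1 1 1) + (γ.1 0 1) * (γ.1 1 0))
     + 2 * q.2.2 * (γ.1 1 0) * (γ.1 1 1),
   q.1 * (γ.1 0 1) ^ 2 + q.2.1 * (γ.1 0 1) * (γ.1 1 1) + q.2.2 * (γ.1 1 1) ^ 2)

/-- A narrow class: an orbit of the `SL₂(ℤ)`-action on `QD D`. -/
def IsNarrowClass (D : ℤ) (𝒜 : Set (ℤ × ℤ × ℤ)) : Prop :=
  ∃ q₀ ∈ QD D, 𝒜 = {q | ∃ γ : Matrix.SpecialLinearGroup (Fin 2) ℤ, QAct q₀ γ = q}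

/-- `F_{1-k,D,𝒜}`. -/
def FA (k : ℕ) (D : ℤ) (𝒜 : Set (ℤ × ℤ × ℤ)) (τ : ℂ) : ℂ :=
  ((-1 : ℂ) ^ k * Dpow D (1 / 2 - (k : ℝ)) /
      (((Nat.choose (2 * k - 2) (k - 1) : ℝ) * Real.pi : ℝ) : ℂ)) *
    ∑' q : 𝒜, Fsummand k D τ (q : ℤ × ℤ × ℤ)

/-- `f_{k,D,𝒜}`. -/
def fA (k : ℕ) (D : ℤ) (𝒜 : Set (ℤ × ℤ × ℤ)) (τ : ℂ) : ℂ :=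
  ((-1 : ℂ) ^ k * Dpow D ((k : ℝ) - 1 / 2) /
      (((Nat.choose (2 * k - 2) (k - 1) : ℝ) * Real.pi : ℝ) : ℂ)) *
    ∑' q : 𝒜, Qval (q : ℤ × ℤ × ℤ) τ ^ (-(k : ℤ))

/-- Partial derivative in the real direction `x`. -/
def dxx (G : ℂ → ℂ) (τ : ℂ) : ℂ :=
  deriv (fun x : ℝ => G ((x : ℂ) + (τ.im : ℂ) * Complex.I)) τ.re

/-- Partial derivative in the imaginary direction `y`. -/
def dyy (G : ℂ → ℂ) (τ : ℂ) : ℂ :=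
  deriv (fun y : ℝ => G ((τ.re : ℂ) + (y : ℂ) * Complex.I)) τ.im

/-- Wirtinger derivative `∂/∂τ̄ = (1/2)(∂/∂x + i ∂/∂y)`. -/
def wirDbar (G : ℂ → ℂ) (τ : ℂ) : ℂ := (dxx G τ + Complex.I * dyy G τ) / 2

/-- Wirtinger derivative `∂/∂τ = (1/2)(∂/∂x - i ∂/∂y)`. -/
def wirD (G : ℂ → ℂ) (τ : ℂ) : ℂ := (dxx G τ - Complex.I * dyy G τ) / 2

/-- The operator `ξ_{2-2k}(G)(τ) = 2 i y^{2-2k} conj(∂G/∂τ̄)`. -/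
def xiOp (k : ℕ) (G : ℂ → ℂ) (τ : ℂ) : ℂ :=
  2 * Complex.I * (τ.im : ℂ) ^ ((2 : ℤ) - 2 * (k : ℤ)) * (starRingEnd ℂ) (wirDbar G τ)

/-- The operator `𝒟 = (1/(2πi)) ∂/∂τ`. -/
def Dop (G : ℂ → ℂ) : ℂ → ℂ := fun τ => (1 / (2 * (Real.pi : ℂ) * Complex.I)) * wirD G τ

/-- The weight `2-2k` hyperbolic Laplacian. -/
def DeltaOp (k : ℕ) (G : ℂ → ℂ) (τ : ℂ) : ℂ :=
  -(τ.im : ℂ) ^ 2 * (dxx (fun z => dxx G z) τ + dyy (fun z => dyy G z) τ)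
    + Complex.I * ((2 : ℂ) - 2 * (k : ℂ)) * (τ.im : ℂ) * (dxx G τ + Complex.I * dyy G τ)

/-- `φ(v) = ∫₀ᵛ sin(u)^{2k-2} du`. -/
def phi (k : ℕ) (v : ℝ) : ℝ := ∫ u in (0:ℝ)..v, Real.sin u ^ (2 * k - 2)

/-- `φ̂(τ) = τ^{k-1} sgn(x) φ(arctan|y/x|)`, with value `0` when `x = 0`. -/
def phiHat (k : ℕ) (τ : ℂ) : ℂ :=
  τ ^ (k - 1) * ((Real.sign τ.re : ℝ) : ℂ) *
    ((phi k (Real.arctan |τ.im / τ.re|) : ℝ) : ℂ)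

/-- The non-holomorphic Eichler integral
`f^*(τ) = (2i)^{1-2k} ∫_{-τ̄}^{i∞} conj(f(-z̄)) (z+τ)^{2k-2} dz`,
parametrized along the vertical path `z = -τ̄ + it`, `t ∈ (0,∞)`. -/
def fstar (k : ℕ) (f : ℂ → ℂ) (τ : ℂ) : ℂ :=
  (2 * Complex.I) ^ ((1 : ℤ) - 2 * (k : ℤ)) * Complex.I *
    ∫ t in Set.Ioi (0 : ℝ), (starRingEnd ℂ) (f (τ + (t : ℂ) * Complex.I)) *
      (((2 * τ.im + t : ℝ) : ℂ) * Complex.I) ^ (2 * k - 2)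

/-- `a : ℕ → ℂ` is the sequence of Fourier coefficients of `f` (with `a n` the
coefficient of `e^{2πi(n+1)τ}`). -/
def HasFourier (a : ℕ → ℂ) (f : ℂ → ℂ) : Prop :=
  ∀ τ : ℂ, 0 < τ.im →
    f τ = ∑' n : ℕ, a n * Complex.exp (2 * (Real.pi : ℂ) * Complex.I * ((n : ℂ) + 1) * τ)

/-- The holomorphic Eichler integral `ℰ_f(τ) = ∑_{n≥1} (a_n/n^{2k-1}) e^{2πinτ}`. -/
def EichlerE (k : ℕ) (a : ℕ → ℂ) (τ : ℂ) : ℂ :=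
  ∑' n : ℕ, a n / ((n : ℂ) + 1) ^ (2 * k - 1) *
    Complex.exp (2 * (Real.pi : ℂ) * Complex.I * ((n : ℂ) + 1) * τ)

/-- `r_{a,b}(𝒜) = 1_{[Q_{a,b} ∈ 𝒜]} + (-1)^k 1_{[-Q_{a,b} ∈ 𝒜]}`. -/
def rab (k : ℕ) (D : ℤ) (𝒜 : Set (ℤ × ℤ × ℤ)) (a b : ℤ) : ℝ :=
  Set.indicator 𝒜 1 (a, b, (b ^ 2 - D) / (4 * a)) +
    (-1 : ℝ) ^ k * Set.indicator 𝒜 1 (-a, -b, -((b ^ 2 - D) / (4 * a)))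

/-- The constant `c_∞(𝒜)`. -/
def cInftyA (k : ℕ) (D : ℤ) (𝒜 : Set (ℤ × ℤ × ℤ)) : ℝ :=
  -(1 / (2 ^ (2 * k - 2) * (2 * (k : ℝ) - 1) * (Nat.choose (2 * k - 2) (k - 1) : ℝ))) *
    ∑' n : ℕ, (1 / ((n : ℝ) + 1) ^ k) *
      ∑ b ∈ Finset.range (2 * (n + 1)),
        if (4 * ((n : ℤ) + 1)) ∣ ((b : ℤ) ^ 2 - D) then rab k D 𝒜 ((n : ℤ) + 1) (b : ℤ) else 0

/-- The constant `c_∞`. -/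
def cInfty (k : ℕ) (D : ℤ) : ℝ :=
  -(1 / (2 ^ (2 * k - 3) * (2 * (k : ℝ) - 1) * (Nat.choose (2 * k - 2) (k - 1) : ℝ))) *
    ∑' n : ℕ, (1 / ((n : ℝ) + 1) ^ k) *
      (((Finset.range (2 * (n + 1))).filter
        (fun b : ℕ => (4 * ((n : ℤ) + 1)) ∣ ((b : ℤ) ^ 2 - D))).card : ℝ)

/-- The weight `2-2k` Hecke operator `T_p`. -/
def heckeT (k : ℕ) (p : ℕ) (g : ℂ → ℂ) (τ : ℂ) : ℂ :=
  (p : ℂ) ^ ((1 : ℤ) - 2 * (k : ℤ)) * g ((p : ℂ) * τ) +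
    (p : ℂ)⁻¹ * ∑ r ∈ Finset.range p, g ((τ + (r : ℂ)) / (p : ℂ))

open scoped Classical in
/-- The symbol `(D|p)`. -/
def legSym (D : ℤ) (p : ℕ) : ℤ :=
  if (p : ℤ) ∣ D then 0
  else if p = 2 then (if D % 8 = 1 ∨ D % 8 = 7 then 1 else -1)
  else if ∃ m : ℤ, (p : ℤ) ∣ (m ^ 2 - D) then 1 else -1

/-- Primitive forms of discriminant `D`. -/
def QDprim (D : ℤ) : Set (ℤ × ℤ × ℤ) :=
  {q | q.2.1 ^ 2 - 4 * q.1 * q.2.2 = D ∧ Int.gcd q.1 (Int.gcd q.2.1 q.2.2) = 1}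

/-- `F'_{1-k,D}`: the sum over primitive forms, with normalization `D^{(1-k)/2}`. -/
def Fprim (k : ℕ) (D : ℤ) (τ : ℂ) : ℂ :=
  (Dpow D ((1 - (k : ℝ)) / 2) / (((Nat.choose (2 * k - 2) (k - 1) : ℝ) * Real.pi : ℝ) : ℂ)) *
    ∑' q : QDprim D, Fsummand k D τ (q : ℤ × ℤ × ℤ)

/-- The root `η_Q = (-b+√D)/(2a)`. -/
def etaQ (D : ℤ) (q : ℤ × ℤ × ℤ) : ℝ := (-(q.2.1 : ℝ) + Real.sqrt (D : ℝ)) / (2 * (q.1 : ℝ))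

/-- The root `η'_Q = (-b-√D)/(2a)`. -/
def etaQ' (D : ℤ) (q : ℤ × ℤ × ℤ) : ℝ := (-(q.2.1 : ℝ) - Real.sqrt (D : ℝ)) / (2 * (q.1 : ℝ))

/-- The scaling matrix `A_Q`. -/
def AQ (D : ℤ) (q : ℤ × ℤ × ℤ) : Matrix (Fin 2) (Fin 2) ℝ :=
  (1 / Real.sqrt |etaQ D q - etaQ' D q|) •
    !![1, -(etaQ' D q);
       -(Real.sign (etaQ D q - etaQ' D q)), Real.sign (etaQ D q - etaQ' D q) * etaQ D q]

/-- Real matrix associated to an element of `SL₂(ℤ)`. -/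
def toR (γ : Matrix.SpecialLinearGroup (Fin 2) ℤ) : Matrix (Fin 2) (Fin 2) ℝ :=
  γ.1.map (fun n => (n : ℝ))

/-- Möbius action of a real `2×2` matrix on `ℂ`. -/
def moeb (g : Matrix (Fin 2) (Fin 2) ℝ) (τ : ℂ) : ℂ :=
  ((g 0 0 : ℝ) * τ + (g 0 1 : ℝ)) / ((g 1 0 : ℝ) * τ + (g 1 1 : ℝ))

/-- Automorphy factor `j(g,τ) = cτ + d`. -/
def jfac (g : Matrix (Fin 2) (Fin 2) ℝ) (τ : ℂ) : ℂ :=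
  ((g 1 0 : ℝ) : ℂ) * τ + ((g 1 1 : ℝ) : ℂ)

/-- `n`-th period `r_n(f) = ∫₀^∞ f(it) tⁿ dt`. -/
def periodR (f : ℂ → ℂ) (n : ℕ) : ℂ :=
  ∫ t in Set.Ioi (0 : ℝ), f ((t : ℂ) * Complex.I) * (t : ℂ) ^ n

/-- The even period polynomial `r⁺(f;X)`. -/
def rPlus (k : ℕ) (f : ℂ → ℂ) : Polynomial ℂ :=
  ∑ m ∈ Finset.range k,
    Polynomial.C ((-1 : ℂ) ^ m * (Nat.choose (2 * k - 2) (2 * m) : ℂ) * periodR f (2 * m)) *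
      Polynomial.X ^ (2 * k - 2 - 2 * m)

end

/-!
The matrix `AQ D q₀` carries the form `XY` to `-q₀ / √D`, so `AQ D q₀ * γ` carries it to
`-(q₀ ∘ γ) / √D`. Evaluating this at `τ` and substituting `u ↦ sin² u` in `psi` turns
`j(AQ γ, τ) ^ (2k-2) · φ̂((AQ γ) τ)` into a constant times the summand of `F_{1-k,D,𝒜}` at `q₀ ∘ γ`,
and `γ ↦ q₀ ∘ γ` is a bijection from the cosets of the stabilizer of `q₀` onto the orbit.

For absolute convergence, the summand at `q` is `O(|q(τ,1)| ^ (-k))`, and `|q(τ,1)|` is at least a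
constant multiple of `1 + ‖q‖`. The forms with `b ^ 2 ≠ D` are counted by pairs `a ∣ b ^ 2 - D`, of
which there are `O(|b| ^ ε)` for each `b`; those with `b ^ 2 = D` lie on the axes `a c = 0`.
-/

/-! ### Divisor bounds and the number of forms of small height -/

lemma add_one_le_mul_one_add_pow {x : ℝ} (hx : 0 < x) (n : ℕ) :
    (n : ℝ) + 1 ≤ (1 + x⁻¹) * (1 + x) ^ n := by
  have bernoulli : 1 + n * x ≤ (1 + x) ^ n := one_add_mul_le_pow (by linarith) n
  calc (n : ℝ) + 1 ≤ (n + 1) + (n * x + x⁻¹) := le_add_of_nonneg_right (by positivity)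
    _ = (1 + x⁻¹) * (1 + n * x) := by field_simp; ring
    _ ≤ (1 + x⁻¹) * (1 + x) ^ n := by gcongr

lemma add_one_le_rpow_pow {ε : ℝ} (hε : 0 < ε) {p : ℕ} (hp : 2 ≤ p) (n : ℕ) :
    (n : ℝ) + 1 ≤ (if (p : ℝ) ^ ε < 2 then 1 + ((2 : ℝ) ^ ε - 1)⁻¹ else 1) * ((p : ℝ) ^ ε) ^ n := by
  have hx : 0 < (2 : ℝ) ^ ε - 1 := sub_pos.2 (Real.one_lt_rpow one_lt_two hε)
  split_ifs with hpε
  · calc (n : ℝ) + 1 ≤ (1 + ((2 : ℝ) ^ ε - 1)⁻¹) * (1 + ((2 : ℝ) ^ ε - 1)) ^ n :=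
          add_one_le_mul_one_add_pow hx n
      _ ≤ (1 + ((2 : ℝ) ^ ε - 1)⁻¹) * ((p : ℝ) ^ ε) ^ n := by
          rw [add_sub_cancel]
          gcongr
          exact_mod_cast hp
  · calc (n : ℝ) + 1 ≤ 2 ^ n := by exact_mod_cast Nat.succ_le_of_lt n.lt_two_pow_self
      _ ≤ 1 * ((p : ℝ) ^ ε) ^ n := by
          rw [one_mul]
          gcongr
          exact not_lt.1 hpε

lemma exists_card_divisors_le_mul_rpow {ε : ℝ} (hε : 0 < ε) :
    ∃ C : ℝ, 0 ≤ C ∧ ∀ n : ℕ, (n.divisors.card : ℝ) ≤ C * (n : ℝ) ^ ε := by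
  set K : ℝ := 1 + ((2 : ℝ) ^ ε - 1)⁻¹
  have hK : 1 ≤ K := le_add_of_nonneg_right
    (inv_nonneg.2 (sub_nonneg.2 (Real.one_le_rpow one_le_two hε.le)))
  have card_small (n : ℕ) :
      (n.primeFactors.filter fun p : ℕ => (p : ℝ) ^ ε < 2).card ≤ ⌈(2 : ℝ) ^ ε⁻¹⌉₊ := by
    refine (Finset.card_le_card fun p hp => ?_).trans_eq (Finset.card_range _)
    rw [Finset.mem_range, Nat.lt_ceil, Real.lt_rpow_inv_iff_of_pos (by positivity) zero_le_two hε]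
    exact (Finset.mem_filter.1 hp).2
  refine ⟨K ^ ⌈(2 : ℝ) ^ ε⁻¹⌉₊, by positivity, fun n => ?_⟩
  rcases eq_or_ne n 0 with rfl | hn
  · simp [hε.ne']
  calc (n.divisors.card : ℝ) = ∏ p ∈ n.primeFactors, ((n.factorization p : ℝ) + 1) := by
        rw [Nat.card_divisors hn]; push_cast; rfl
    _ ≤ ∏ p ∈ n.primeFactors,
          (if (p : ℝ) ^ ε < 2 then K else 1) * ((p : ℝ) ^ ε) ^ n.factorization p :=
        Finset.prod_le_prod (fun _ _ => by positivity) fun p hp =>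
          add_one_le_rpow_pow hε (Nat.prime_of_mem_primeFactors hp).two_le _
    _ = K ^ (n.primeFactors.filter fun p : ℕ => (p : ℝ) ^ ε < 2).card * (n : ℝ) ^ ε := by
        rw [Finset.prod_mul_distrib, ← Finset.prod_filter, Finset.prod_const]
        simp_rw [Real.rpow_pow_comm (Nat.cast_nonneg _)]
        rw [Real.finsetProd_rpow _ _ (fun _ _ => by positivity)]
        congr 2
        exact_mod_cast Nat.prod_factorization_pow_eq_self hn
    _ ≤ K ^ ⌈(2 : ℝ) ^ ε⁻¹⌉₊ * (n : ℝ) ^ ε := by gcongr; exact card_small n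

lemma card_int_divisors (z : ℤ) : z.divisors.card = 2 * z.natAbs.divisors.card := by
  rw [Int.divisors, Finset.card_disjUnion, Finset.card_map, Finset.card_map, two_mul]

lemma exists_card_divisors_sq_sub_le (D : ℤ) {ε : ℝ} (hε : 0 < ε) :
    ∃ C : ℝ, ∀ b : ℤ, ((b ^ 2 - D).divisors.card : ℝ) ≤ C * (1 + |(b : ℝ)|) ^ ε := by
  obtain ⟨C, hC, hdiv⟩ := exists_card_divisors_le_mul_rpow (half_pos hε)
  refine ⟨2 * (C * (1 + |(D : ℝ)|) ^ (ε / 2)), fun b => ?_⟩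
  have natAbs_le : ((b ^ 2 - D).natAbs : ℝ) ≤ (1 + |(D : ℝ)|) * (1 + |(b : ℝ)|) ^ 2 := by
    rw [Nat.cast_natAbs]
    push_cast
    calc |(b : ℝ) ^ 2 - D| ≤ |(b : ℝ) ^ 2| + |(D : ℝ)| := abs_sub _ _
      _ = |(b : ℝ)| ^ 2 + |(D : ℝ)| := by rw [abs_pow]
      _ ≤ (1 + |(D : ℝ)|) * (1 + |(b : ℝ)|) ^ 2 := by
          nlinarith [mul_nonneg (abs_nonneg (D : ℝ)) (abs_nonneg (b : ℝ)), abs_nonneg (b : ℝ),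
            mul_nonneg (abs_nonneg (D : ℝ)) (sq_nonneg |(b : ℝ)|)]
  rw [card_int_divisors, Nat.cast_mul, Nat.cast_ofNat, mul_assoc]
  gcongr
  calc ((b ^ 2 - D).natAbs.divisors.card : ℝ) ≤ C * ((b ^ 2 - D).natAbs : ℝ) ^ (ε / 2) := hdiv _
    _ ≤ C * ((1 + |(D : ℝ)|) * (1 + |(b : ℝ)|) ^ 2) ^ (ε / 2) := by gcongr
    _ = C * (1 + |(D : ℝ)|) ^ (ε / 2) * (1 + |(b : ℝ)|) ^ ε := by
        rw [Real.mul_rpow (by positivity) (by positivity), ← Real.rpow_natCast,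
          ← Real.rpow_mul (by positivity), Nat.cast_ofNat, mul_div_cancel₀ ε two_ne_zero, mul_assoc]

lemma summable_one_add_abs_int_rpow {s : ℝ} (hs : 1 < s) :
    Summable fun n : ℤ => (1 + |(n : ℝ)|) ^ (-s) := by
  refine (Real.summable_abs_int_rpow hs).of_norm_bounded_eventually ?_
  filter_upwards [(Set.finite_singleton (0 : ℤ)).compl_mem_cofinite] with n hn
  have hn : 0 < |(n : ℝ)| := abs_pos.2 (Int.cast_ne_zero.2 hn)
  rw [Real.norm_of_nonneg (by positivity)]
  exact Real.rpow_le_rpow_of_nonpos hn (by linarith) (by linarith)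

lemma summable_sigma_divisors_sq_sub (D : ℤ) {s : ℝ} (hs : 1 < s) :
    Summable fun p : Σ b : ℤ, (b ^ 2 - D).divisors => (1 + |(p.1 : ℝ)|) ^ (-s) := by
  obtain ⟨C, hC⟩ := exists_card_divisors_sq_sub_le D (half_pos (sub_pos.2 hs))
  rw [summable_sigma_of_nonneg fun p => by positivity]
  refine ⟨fun b => Summable.of_finite, ?_⟩
  have summable_bound := summable_one_add_abs_int_rpow (s := (1 + s) / 2) (by linarith)
  refine (summable_bound.mul_left C).of_nonneg_of_le (fun b => by positivity) fun b => ?_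
  have hb : 0 < 1 + |(b : ℝ)| := by positivity
  simp only [tsum_fintype, Finset.sum_const, Finset.card_univ, Fintype.card_coe,
    nsmul_eq_mul]
  calc ((b ^ 2 - D).divisors.card : ℝ) * (1 + |(b : ℝ)|) ^ (-s)
      ≤ C * (1 + |(b : ℝ)|) ^ ((s - 1) / 2) * (1 + |(b : ℝ)|) ^ (-s) := by gcongr; exact hC b
    _ = C * (1 + |(b : ℝ)|) ^ (-((1 + s) / 2)) := by
        rw [mul_assoc, ← Real.rpow_add hb]
        ring_nf

lemma summable_one_add_norm_rpow_sq_ne (D : ℤ) {s : ℝ} (hs : 1 < s) :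
    Summable fun q : {q : QD D | q.1.2.1 ^ 2 ≠ D} => (1 + ‖(q : ℤ × ℤ × ℤ)‖) ^ (-s) := by
  have fst_mem (q : {q : QD D | q.1.2.1 ^ 2 ≠ D}) :
      q.1.1.1 ∈ (q.1.1.2.1 ^ 2 - D).divisors := by
    obtain ⟨⟨⟨a, b, c⟩, hq : b ^ 2 - 4 * a * c = D⟩, hb⟩ := q
    exact Int.mem_divisors.2 ⟨⟨4 * c, by linarith⟩, sub_ne_zero.2 hb⟩
  let i (q : {q : QD D | q.1.2.1 ^ 2 ≠ D}) : Σ b : ℤ, (b ^ 2 - D).divisors :=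
    ⟨q.1.1.2.1, q.1.1.1, fst_mem q⟩
  have hi : Function.Injective i := by
    rintro ⟨⟨⟨a, b, c⟩, hq : b ^ 2 - 4 * a * c = D⟩, hb : b ^ 2 ≠ D⟩
      ⟨⟨⟨a', b', c'⟩, hq' : b' ^ 2 - 4 * a' * c' = D⟩, _⟩ h
    obtain rfl : b = b' := congrArg Sigma.fst h
    obtain rfl : a = a' := congrArg (fun p : Σ b : ℤ, (b ^ 2 - D).divisors => (p.2 : ℤ)) h
    have ha : a ≠ 0 := by
      rintro rfl
      exact hb (by linarith)
    obtain rfl : c = c' := mul_left_cancel₀ (mul_ne_zero four_ne_zero ha) (by linarith)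
    rfl
  refine ((summable_sigma_divisors_sq_sub D hs).comp_injective hi).of_nonneg_of_le
    (fun q => by positivity) fun q => ?_
  have snd_le : |(q.1.1.2.1 : ℝ)| ≤ ‖q.1.1‖ := (norm_fst_le q.1.1.2).trans (norm_snd_le q.1.1)
  exact Real.rpow_le_rpow_of_nonpos (by positivity) (by gcongr) (by linarith)

lemma prod_one_add_abs_le_of_sq_eq {D : ℤ} {q : ℤ × ℤ × ℤ} (hq : q ∈ QD D) (hb : q.2.1 ^ 2 = D) :
    (1 + |(q.1 : ℝ)|) * ((1 + |(q.2.1 : ℝ)|) * (1 + |(q.2.2 : ℝ)|)) ≤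
      2 * (1 + |(D : ℝ)|) * (1 + ‖q‖) := by
  have hac : |(q.1 : ℝ)| * |(q.2.2 : ℝ)| = 0 := by
    have hdisc : q.2.1 ^ 2 - 4 * q.1 * q.2.2 = D := hq
    have : q.1 * q.2.2 = 0 := by linarith
    rw [← abs_mul]
    exact_mod_cast abs_eq_zero.2 this
  have fst_le : |(q.1 : ℝ)| ≤ ‖q‖ := norm_fst_le q
  have trd_le : |(q.2.2 : ℝ)| ≤ ‖q‖ := (norm_snd_le q.2).trans (norm_snd_le q)
  have snd_le : |(q.2.1 : ℝ)| ≤ |(D : ℝ)| := by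
    rw [← hb]
    push_cast
    rw [abs_pow]
    exact_mod_cast Int.le_self_sq |q.2.1|
  calc (1 + |(q.1 : ℝ)|) * ((1 + |(q.2.1 : ℝ)|) * (1 + |(q.2.2 : ℝ)|))
      = (1 + |(q.2.1 : ℝ)|) * (1 + |(q.1 : ℝ)| + |(q.2.2 : ℝ)|) := by
        linear_combination (1 + |(q.2.1 : ℝ)|) * hac
    _ ≤ (1 + |(D : ℝ)|) * (1 + ‖q‖ + (1 + ‖q‖)) := by gcongr; linarith
    _ = 2 * (1 + |(D : ℝ)|) * (1 + ‖q‖) := by ring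

lemma summable_one_add_norm_rpow_sq_eq (D : ℤ) {s : ℝ} (hs : 1 < s) :
    Summable fun q : {q : QD D | q.1.2.1 ^ 2 = D} => (1 + ‖(q : ℤ × ℤ × ℤ)‖) ^ (-s) := by
  have summable_int := summable_one_add_abs_int_rpow hs
  have summable_prod : Summable fun q : ℤ × ℤ × ℤ =>
      (1 + |(q.1 : ℝ)|) ^ (-s) * ((1 + |(q.2.1 : ℝ)|) ^ (-s) * (1 + |(q.2.2 : ℝ)|) ^ (-s)) :=
    summable_int.mul_of_nonneg
      (summable_int.mul_of_nonneg summable_int (fun _ => by positivity) fun _ => by positivity)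
      (fun _ => by positivity) fun _ => by positivity
  refine (((summable_prod.comp_injective Subtype.val_injective).comp_injective
    Subtype.val_injective).mul_left ((2 * (1 + |(D : ℝ)|))⁻¹ ^ (-s))).of_nonneg_of_le
    (fun q => by positivity) fun ⟨⟨q, hq⟩, hb⟩ => ?_
  simp only [Function.comp_apply]
  rw [← Real.mul_rpow (by positivity) (by positivity),
    ← Real.mul_rpow (by positivity) (by positivity),
    ← Real.mul_rpow (by positivity) (by positivity)]
  refine Real.rpow_le_rpow_of_nonpos (by positivity) ?_ (by linarith)
  exact (inv_mul_le_iff₀ (by positivity)).2 (prod_one_add_abs_le_of_sq_eq hq hb)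

lemma summable_one_add_norm_rpow (D : ℤ) {s : ℝ} (hs : 1 < s) :
    Summable fun q : QD D => (1 + ‖(q : ℤ × ℤ × ℤ)‖) ^ (-s) :=
  (summable_one_add_norm_rpow_sq_eq D hs).add_compl (summable_one_add_norm_rpow_sq_ne D hs)

/-! ### Lower bounds for `|q(τ,1)|` -/

lemma sq_norm_Qval {D : ℤ} {q : ℤ × ℤ × ℤ} (hq : q ∈ QD D) (τ : ℂ) :
    ‖Qval q τ‖ ^ 2 = Qell q τ ^ 2 + D * τ.im ^ 2 := by
  have hdisc : (q.2.1 : ℝ) ^ 2 - 4 * q.1 * q.2.2 = D := by exact_mod_cast hq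
  rw [Complex.sq_norm, Complex.normSq_apply, ← hdisc, Qell, Qval, Complex.normSq_apply]
  simp only [Complex.add_re, Complex.add_im, Complex.mul_re, Complex.mul_im, Complex.intCast_re,
    Complex.intCast_im, pow_two]
  ring

lemma sqrt_mul_abs_im_le_norm_Qval {D : ℤ} (hD : 0 ≤ D) {q : ℤ × ℤ × ℤ} (hq : q ∈ QD D) (τ : ℂ) :
    √D * |τ.im| ≤ ‖Qval q τ‖ := by
  refine le_of_sq_le_sq ?_ (norm_nonneg _)
  rw [sq_norm_Qval hq, mul_pow, Real.sq_sqrt (by exact_mod_cast hD), sq_abs]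
  exact le_add_of_nonneg_left (sq_nonneg _)

lemma abs_Qell_le_norm_Qval {D : ℤ} (hD : 0 ≤ D) {q : ℤ × ℤ × ℤ} (hq : q ∈ QD D) (τ : ℂ) :
    |Qell q τ| ≤ ‖Qval q τ‖ := by
  refine abs_le_of_sq_le_sq ?_ (norm_nonneg _)
  rw [sq_norm_Qval hq]
  have : (0 : ℝ) ≤ D := by exact_mod_cast hD
  exact le_add_of_nonneg_right (by positivity)

/-- The real-linear extension of `q ↦ (Qell q τ, Qval q τ)` to forms with real coefficients; its
injectivity is what makes `‖q‖` controlled by the values of `q` at `τ`. -/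
def evalForm (τ : ℂ) : ℝ × ℝ × ℝ →ₗ[ℝ] ℝ × ℂ where
  toFun v := (v.1 * Complex.normSq τ + v.2.1 * τ.re + v.2.2, v.1 * τ ^ 2 + v.2.1 * τ + v.2.2)
  map_add' v w := by
    ext <;> simp <;> ring
  map_smul' r v := by
    ext <;> simp <;> ring

lemma ker_evalForm {τ : ℂ} (hτ : τ.im ≠ 0) : LinearMap.ker (evalForm τ) = ⊥ := by
  refine LinearMap.ker_eq_bot'.2 fun ⟨a, b, c⟩ h => ?_
  have hell : a * (τ.re * τ.re + τ.im * τ.im) + b * τ.re + c = 0 := congrArg Prod.fst h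
  have hval : (a * τ ^ 2 + b * τ + c : ℂ) = 0 := congrArg Prod.snd h
  have hre := congrArg Complex.re hval
  have him := congrArg Complex.im hval
  simp only [pow_two, Complex.add_re, Complex.add_im, Complex.mul_re, Complex.mul_im,
    Complex.ofReal_re, Complex.ofReal_im, Complex.zero_re, Complex.zero_im] at hre him
  obtain rfl : a = 0 := by
    have : a * (2 * τ.im ^ 2) = 0 := by linear_combination hell - hre
    simpa [hτ] using this
  obtain rfl : b = 0 := by
    have : b * τ.im = 0 := by linear_combination him
    simpa [hτ] using this
  obtain rfl : c = 0 := by linear_combination hell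
  rfl

lemma exists_one_add_norm_le_mul_norm_Qval {D : ℤ} (hD : 0 < D) {τ : ℂ} (hτ : τ.im ≠ 0) :
    ∃ C : ℝ, 0 < C ∧ ∀ q ∈ QD D, 1 + ‖q‖ ≤ C * ‖Qval q τ‖ := by
  obtain ⟨K, hK, hKanti⟩ := (evalForm τ).exists_antilipschitzWith (ker_evalForm hτ)
  have hE : 0 < √D * |τ.im| := mul_pos (Real.sqrt_pos.2 (Int.cast_pos.2 hD)) (abs_pos.2 hτ)
  refine ⟨(√D * |τ.im|)⁻¹ + K, by positivity, fun q hq => ?_⟩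
  rw [add_mul]
  gcongr
  · rw [inv_mul_eq_div, one_le_div hE]
    exact sqrt_mul_abs_im_le_norm_Qval hD.le hq τ
  · let v : ℝ × ℝ × ℝ := (q.1, q.2.1, q.2.2)
    calc ‖q‖ = ‖v‖ := rfl
      _ ≤ K * ‖evalForm τ v‖ := hKanti.le_mul_norm (map_zero _) v
      _ = K * max |Qell q τ| ‖Qval q τ‖ := by simp [evalForm, v, Prod.norm_def, Qell, Qval]
      _ = K * ‖Qval q τ‖ := by rw [max_eq_right (abs_Qell_le_norm_Qval hD.le hq τ)]

lemma summable_norm_Qval_rpow {D : ℤ} (hD : 0 < D) {τ : ℂ} (hτ : τ.im ≠ 0) {s : ℝ} (hs : 1 < s) :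
    Summable fun q : QD D => ‖Qval q τ‖ ^ (-s) := by
  obtain ⟨C, hC, hle⟩ := exists_one_add_norm_le_mul_norm_Qval hD hτ
  refine ((summable_one_add_norm_rpow D hs).mul_left (C⁻¹ ^ (-s))).of_nonneg_of_le
    (fun q => by positivity) fun q => ?_
  rw [← Real.mul_rpow (by positivity) (by positivity)]
  exact Real.rpow_le_rpow_of_nonpos (by positivity)
    ((inv_mul_le_iff₀ hC).2 (hle q q.2)) (by linarith)

/-! ### The summands of `F_{1-k,D}` -/

lemma psi_integrand_sin_sq {k : ℕ} (hk : 2 ≤ k) {u : ℝ} (hsin : 0 ≤ Real.sin u)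
    (hcos : 0 < Real.cos u) :
    (Real.sin u ^ 2) ^ ((k : ℝ) - 3 / 2) * (1 - Real.sin u ^ 2) ^ (-(1 : ℝ) / 2) *
      (2 * Real.sin u * Real.cos u) = 2 * Real.sin u ^ (2 * k - 2) := by
  have sin_rpow : (Real.sin u ^ 2) ^ ((k : ℝ) - 3 / 2) = Real.sin u ^ (2 * k - 3) := by
    rw [← Real.rpow_natCast _ 2, ← Real.rpow_mul hsin, ← Real.rpow_natCast, Nat.cast_sub (by omega)]
    push_cast
    ring_nf
  have cos_rpow : (1 - Real.sin u ^ 2) ^ (-(1 : ℝ) / 2) = (Real.cos u)⁻¹ := by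
    rw [← Real.cos_sq', neg_div, Real.rpow_neg (sq_nonneg _), ← Real.sqrt_eq_rpow,
      Real.sqrt_sq hcos.le]
  rw [sin_rpow, cos_rpow, show 2 * k - 2 = 2 * k - 3 + 1 by omega, pow_succ]
  field_simp

lemma psi_sin_sq {k : ℕ} (hk : 2 ≤ k) {v : ℝ} (hv₀ : 0 ≤ v) (hv : v < Real.pi / 2) :
    psi k (Real.sin v ^ 2) = phi k v := by
  have sin_nonneg {u : ℝ} (hu : u ∈ Set.uIcc 0 v) : 0 ≤ Real.sin u := by
    rw [Set.uIcc_of_le hv₀] at hu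
    exact Real.sin_nonneg_of_nonneg_of_le_pi hu.1 (by linarith [hu.2, Real.pi_pos])
  have cos_pos {u : ℝ} (hu : u ∈ Set.uIcc 0 v) : 0 < Real.cos u := by
    rw [Set.uIcc_of_le hv₀] at hu
    exact Real.cos_pos_of_mem_Ioo ⟨by linarith [hu.1, Real.pi_pos], hu.2.trans_lt hv⟩
  have change_var := intervalIntegral.integral_comp_mul_deriv'' (a := 0) (b := v)
    (f := fun u => Real.sin u ^ 2) (f' := fun u => 2 * Real.sin u * Real.cos u)
    (g := fun u : ℝ => u ^ ((k : ℝ) - 3 / 2) * (1 - u) ^ (-(1 : ℝ) / 2))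
    (by fun_prop)
    (fun u _ => by simpa using ((Real.hasDerivAt_sin u).fun_pow 2).hasDerivWithinAt)
    (by fun_prop)
    (by
      rintro _ ⟨u, hu, rfl⟩
      have exponent_nonneg : (0 : ℝ) ≤ k - 3 / 2 := by
        linarith [show (2 : ℝ) ≤ k from by exact_mod_cast hk]
      have one_sub_ne : 1 - Real.sin u ^ 2 ≠ 0 := by
        rw [← Real.cos_sq']
        exact pow_ne_zero 2 (cos_pos hu).ne'
      exact ((continuousAt_id.rpow_const (Or.inr exponent_nonneg)).mul
        ((continuousAt_const.sub continuousAt_id).rpow_const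
          (Or.inl one_sub_ne))).continuousWithinAt)
  rw [Real.sin_zero, zero_pow two_ne_zero] at change_var
  rw [psi, phi, ← change_var, ← intervalIntegral.integral_const_mul]
  refine intervalIntegral.integral_congr fun u hu => ?_
  simp only [Function.comp_apply]
  rw [psi_integrand_sin_sq hk (sin_nonneg hu) (cos_pos hu)]
  ring

lemma psi_sq {k : ℕ} (hk : 2 ≤ k) {x : ℝ} (hx₀ : 0 ≤ x) (hx : x < 1) :
    psi k (x ^ 2) = phi k (Real.arcsin x) := by
  rw [← psi_sin_sq hk (Real.arcsin_nonneg.2 hx₀) (Real.arcsin_lt_pi_div_two.2 hx),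
    Real.sin_arcsin (by linarith) hx.le]

lemma abs_phi_le (k : ℕ) {v : ℝ} (hv₀ : 0 ≤ v) (hv : v ≤ Real.pi / 2) :
    |phi k v| ≤ Real.pi / 2 * Real.sin v ^ (2 * k - 2 + 1) := by
  have hπ := Real.pi_pos
  have sin_nonneg {u : ℝ} (hu₀ : 0 ≤ u) (hu : u ≤ v) : 0 ≤ Real.sin u :=
    Real.sin_nonneg_of_nonneg_of_le_pi hu₀ (by linarith)
  have integrand_le : ∀ u ∈ Set.uIoc 0 v,
      ‖Real.sin u ^ (2 * k - 2)‖ ≤ Real.sin v ^ (2 * k - 2) := fun u hu => by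
    rw [Set.uIoc_of_le hv₀] at hu
    rw [Real.norm_of_nonneg (pow_nonneg (sin_nonneg hu.1.le hu.2) _)]
    exact pow_le_pow_left₀ (sin_nonneg hu.1.le hu.2)
      (Real.sin_le_sin_of_le_of_le_pi_div_two (by linarith [hu.1]) hv hu.2) _
  have jordan : v ≤ Real.pi / 2 * Real.sin v := by
    have := Real.mul_le_sin hv₀ hv
    calc v = Real.pi / 2 * (2 / Real.pi * v) := by field_simp
      _ ≤ Real.pi / 2 * Real.sin v := by gcongr
  calc |phi k v| ≤ Real.sin v ^ (2 * k - 2) * |v - 0| :=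
        intervalIntegral.norm_integral_le_of_norm_le_const integrand_le
    _ = Real.sin v ^ (2 * k - 2) * v := by rw [sub_zero, abs_of_nonneg hv₀]
    _ ≤ Real.sin v ^ (2 * k - 2) * (Real.pi / 2 * Real.sin v) :=
        mul_le_mul_of_nonneg_left jordan (pow_nonneg (sin_nonneg hv₀ le_rfl) _)
    _ = Real.pi / 2 * Real.sin v ^ (2 * k - 2 + 1) := by ring

lemma arctan_div_eq_arcsin {x y : ℝ} (hx : 0 < x) :
    Real.arctan (y / x) = Real.arcsin (y / √(x ^ 2 + y ^ 2)) := by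
  have : √(1 + (y / x) ^ 2) = √(x ^ 2 + y ^ 2) / x := by
    rw [← Real.sqrt_sq hx.le, ← Real.sqrt_div' _ (sq_nonneg x), Real.sqrt_sq hx.le]
    congr 1
    field_simp
  rw [Real.arctan_eq_arcsin, this, div_div_div_cancel_right₀ hx.ne']

section Summand

variable {k : ℕ} {D : ℤ} {q : ℤ × ℤ × ℤ} {τ : ℂ}

lemma psi_eq_phi_arcsin (hk : 2 ≤ k) (hD : 0 ≤ D) (hq : q ∈ QD D) (hell : Qell q τ ≠ 0) :
    psi k (D * τ.im ^ 2 / Complex.normSq (Qval q τ)) =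
      phi k (Real.arcsin (√D * |τ.im| / ‖Qval q τ‖)) := by
  have hD' : (0 : ℝ) ≤ D := by exact_mod_cast hD
  have hlt : √D * |τ.im| < ‖Qval q τ‖ := by
    refine lt_of_pow_lt_pow_left₀ 2 (norm_nonneg _) ?_
    rw [sq_norm_Qval hq, mul_pow, Real.sq_sqrt hD', sq_abs]
    exact lt_add_of_pos_left _ (by positivity)
  have hlt_one : √D * |τ.im| / ‖Qval q τ‖ < 1 :=
    (div_lt_one (lt_of_le_of_lt (by positivity) hlt)).2 hlt
  rw [← psi_sq hk (by positivity) hlt_one, div_pow, mul_pow, Real.sq_sqrt hD', sq_abs,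
    Complex.sq_norm]

lemma psi_eq_phi_arctan (hk : 2 ≤ k) (hD : 0 ≤ D) (hq : q ∈ QD D) (hell : Qell q τ ≠ 0) :
    psi k (D * τ.im ^ 2 / Complex.normSq (Qval q τ)) =
      phi k (Real.arctan (√D * |τ.im| / |Qell q τ|)) := by
  rw [psi_eq_phi_arcsin hk hD hq hell, arctan_div_eq_arcsin (abs_pos.2 hell), mul_pow,
    Real.sq_sqrt (by exact_mod_cast hD), sq_abs, sq_abs, ← sq_norm_Qval hq,
    Real.sqrt_sq (norm_nonneg _)]

lemma norm_Fsummand_le (hk : 2 ≤ k) (hD : 0 < D) (hq : q ∈ QD D) (hτ : τ.im ≠ 0) :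
    ‖Fsummand k D τ q‖ ≤
      Real.pi / 2 * (√D * |τ.im|) ^ (2 * k - 1) * ‖Qval q τ‖ ^ (-(k : ℝ)) := by
  rcases eq_or_ne (Qell q τ) 0 with hell | hell
  · rw [Fsummand, hell, Real.sign_zero, Complex.ofReal_zero, zero_mul, zero_mul, norm_zero]
    positivity
  set E := √D * |τ.im|
  set N := ‖Qval q τ‖
  have hE : 0 < E := mul_pos (Real.sqrt_pos.2 (Int.cast_pos.2 hD)) (abs_pos.2 hτ)
  have hEN : E ≤ N := sqrt_mul_abs_im_le_norm_Qval hD.le hq τ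
  have hN : 0 < N := hE.trans_le hEN
  have sign_le : |Real.sign (Qell q τ)| ≤ 1 := by
    rcases Real.sign_apply_eq (Qell q τ) with h | h | h <;> rw [h] <;> norm_num
  have phi_le : |phi k (Real.arcsin (E / N))| ≤ Real.pi / 2 * (E / N) ^ (2 * k - 1) := by
    have := abs_phi_le k (Real.arcsin_nonneg.2 (by positivity)) (Real.arcsin_le_pi_div_two (E / N))
    rwa [Real.sin_arcsin (by linarith [div_pos hE hN]) ((div_le_one hN).2 hEN),
      show 2 * k - 2 + 1 = 2 * k - 1 by omega] at this
  rw [Fsummand, psi_eq_phi_arcsin hk hD.le hq hell, norm_mul, norm_mul, norm_pow,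
    Complex.norm_real, Complex.norm_real, Real.norm_eq_abs, Real.norm_eq_abs]
  calc |Real.sign (Qell q τ)| * N ^ (k - 1) * |phi k (Real.arcsin (E / N))|
      ≤ 1 * N ^ (k - 1) * (Real.pi / 2 * (E / N) ^ (2 * k - 1)) := by gcongr
    _ = Real.pi / 2 * E ^ (2 * k - 1) * N ^ (-(k : ℝ)) := by
        rw [Real.rpow_neg hN.le, Real.rpow_natCast, div_pow,
          show 2 * k - 1 = k - 1 + k by omega, pow_add N]
        field_simp

end Summand

lemma summable_Fsummand {k : ℕ} (hk : 2 ≤ k) {D : ℤ} (hD : 0 < D) {τ : ℂ} (hτ : τ.im ≠ 0) :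
    Summable fun q : QD D => Fsummand k D τ q :=
  ((summable_norm_Qval_rpow hD hτ (Nat.one_lt_cast.2 hk)).mul_left _).of_norm_bounded
    fun q => norm_Fsummand_le hk hD q.2 hτ

/-! ### Matrices carrying `XY` to `-q / √D` -/

/-- `g` is a real matrix of determinant one carrying the form `XY` to `-q / √D`; the Möbius map of
such a `g` sends the geodesic attached to `q` to the imaginary axis. -/
structure IsScalingMatrix (D : ℤ) (g : Matrix (Fin 2) (Fin 2) ℝ) (q : ℤ × ℤ × ℤ) : Prop where
  det_eq_one : g.det = 1
  fst : g 0 0 * g 1 0 = -q.1 / √D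
  snd : g 0 0 * g 1 1 + g 0 1 * g 1 0 = -q.2.1 / √D
  trd : g 0 1 * g 1 1 = -q.2.2 / √D

lemma sq_one_div_sqrt_abs_mul_sign (x : ℝ) : (1 / √|x|) ^ 2 * Real.sign x = x⁻¹ := by
  rw [div_pow, one_pow, Real.sq_sqrt (abs_nonneg x)]
  rcases lt_trichotomy x 0 with hx | rfl | hx
  · rw [abs_of_neg hx, Real.sign_of_neg hx, one_div, inv_neg, neg_mul_neg, mul_one]
  · simp
  · rw [abs_of_pos hx, Real.sign_of_pos hx, one_div, mul_one]

lemma sign_div_of_pos (x : ℝ) {c : ℝ} (hc : 0 < c) : Real.sign (x / c) = Real.sign x := by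
  rcases lt_trichotomy x 0 with hx | rfl | hx
  · rw [Real.sign_of_neg hx, Real.sign_of_neg (div_neg_of_neg_of_pos hx hc)]
  · rw [zero_div]
  · rw [Real.sign_of_pos hx, Real.sign_of_pos (div_pos hx hc)]

lemma etaQ_sub_etaQ' (D : ℤ) (q : ℤ × ℤ × ℤ) : etaQ D q - etaQ' D q = √D / q.1 := by
  rw [etaQ, etaQ', ← sub_div, show -(q.2.1 : ℝ) + √D - (-q.2.1 - √D) = 2 * √D by ring,
    mul_div_mul_left _ _ two_ne_zero]

lemma etaQ_add_etaQ' (D : ℤ) (q : ℤ × ℤ × ℤ) : etaQ D q + etaQ' D q = -q.2.1 / q.1 := by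
  rw [etaQ, etaQ', ← add_div, show -(q.2.1 : ℝ) + √D + (-q.2.1 - √D) = 2 * -q.2.1 by ring,
    mul_div_mul_left _ _ two_ne_zero]

lemma etaQ_mul_etaQ' {D : ℤ} (hD : 0 ≤ D) {q : ℤ × ℤ × ℤ} (hq : q ∈ QD D) (hq₁ : q.1 ≠ 0) :
    etaQ D q * etaQ' D q = q.2.2 / q.1 := by
  have hq₁ : (q.1 : ℝ) ≠ 0 := Int.cast_ne_zero.2 hq₁
  have hdisc : (q.2.1 : ℝ) ^ 2 - 4 * q.1 * q.2.2 = D := by exact_mod_cast hq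
  have hsqrt : √D ^ 2 = (D : ℝ) := Real.sq_sqrt (Int.cast_nonneg hD)
  rw [etaQ, etaQ']
  field_simp
  linear_combination hdisc - hsqrt

lemma isScalingMatrix_AQ {D : ℤ} (hD : 0 < D) {q : ℤ × ℤ × ℤ} (hq : q ∈ QD D) (hq₁ : q.1 ≠ 0) :
    IsScalingMatrix D (AQ D q) q := by
  have hq₁' : (q.1 : ℝ) ≠ 0 := Int.cast_ne_zero.2 hq₁
  have hsqrt : √(D : ℝ) ≠ 0 := (Real.sqrt_pos.2 (Int.cast_pos.2 hD)).ne'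
  set κ := 1 / √|etaQ D q - etaQ' D q|
  set σ := Real.sign (etaQ D q - etaQ' D q)
  have hscale : κ ^ 2 * σ = q.1 / √D := by
    rw [sq_one_div_sqrt_abs_mul_sign, etaQ_sub_etaQ', inv_div]
  have h₀₀ : AQ D q 0 0 = κ := by simp [AQ, κ]
  have h₀₁ : AQ D q 0 1 = -(κ * etaQ' D q) := by simp [AQ, κ]
  have h₁₀ : AQ D q 1 0 = -(κ * σ) := by simp [AQ, κ, σ]
  have h₁₁ : AQ D q 1 1 = κ * σ * etaQ D q := by simp [AQ, κ, σ, mul_assoc]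
  refine ⟨?_, ?_, ?_, ?_⟩
  · calc (AQ D q).det = κ ^ 2 * σ * (etaQ D q - etaQ' D q) := by
          rw [Matrix.det_fin_two, h₀₀, h₀₁, h₁₀, h₁₁]
          ring
      _ = 1 := by
          rw [hscale, etaQ_sub_etaQ']
          field_simp
  · calc AQ D q 0 0 * AQ D q 1 0 = -(κ ^ 2 * σ) := by
          rw [h₀₀, h₁₀]
          ring
      _ = -q.1 / √D := by rw [hscale, neg_div]
  · calc AQ D q 0 0 * AQ D q 1 1 + AQ D q 0 1 * AQ D q 1 0
        = κ ^ 2 * σ * (etaQ D q + etaQ' D q) := by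
          rw [h₀₀, h₀₁, h₁₀, h₁₁]
          ring
      _ = -q.2.1 / √D := by
          rw [hscale, etaQ_add_etaQ']
          field_simp
  · calc AQ D q 0 1 * AQ D q 1 1 = -(κ ^ 2 * σ * (etaQ D q * etaQ' D q)) := by
          rw [h₀₁, h₁₁]
          ring
      _ = -q.2.2 / √D := by
          rw [hscale, etaQ_mul_etaQ' hD.le hq hq₁]
          field_simp

lemma jfac_ne_zero {g : Matrix (Fin 2) (Fin 2) ℝ} (hg : g.det ≠ 0) {τ : ℂ} (hτ : τ.im ≠ 0) :
    jfac g τ ≠ 0 := by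
  intro h
  have h₁₀ : g 1 0 = 0 := by simpa [jfac, hτ] using congrArg Complex.im h
  have h₁₁ : g 1 1 = 0 := by simpa [jfac, h₁₀] using h
  exact hg (by rw [Matrix.det_fin_two, h₁₀, h₁₁]; ring)

lemma moeb_im (g : Matrix (Fin 2) (Fin 2) ℝ) (τ : ℂ) :
    (moeb g τ).im = g.det * τ.im / Complex.normSq (jfac g τ) := by
  rw [moeb, ← jfac, Complex.div_im, Matrix.det_fin_two]
  simp only [jfac, Complex.add_re, Complex.add_im, Complex.mul_re, Complex.mul_im,
    Complex.ofReal_re, Complex.ofReal_im]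
  ring

lemma moeb_re (g : Matrix (Fin 2) (Fin 2) ℝ) (τ : ℂ) :
    (moeb g τ).re = (g 0 0 * g 1 0 * Complex.normSq τ + (g 0 0 * g 1 1 + g 0 1 * g 1 0) * τ.re +
      g 0 1 * g 1 1) / Complex.normSq (jfac g τ) := by
  rw [moeb, ← jfac, Complex.div_re, Complex.normSq_apply τ]
  simp only [jfac, Complex.add_re, Complex.add_im, Complex.mul_re, Complex.mul_im,
    Complex.ofReal_re, Complex.ofReal_im]
  ring

namespace IsScalingMatrix

variable {D : ℤ} {g : Matrix (Fin 2) (Fin 2) ℝ} {q : ℤ × ℤ × ℤ} {τ : ℂ}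

lemma mem_QD (hg : IsScalingMatrix D g q) (hD : 0 < D) : q ∈ QD D := by
  have hsqrt : √(D : ℝ) ≠ 0 := (Real.sqrt_pos.2 (Int.cast_pos.2 hD)).ne'
  have hdisc : (-q.2.1 / √D) ^ 2 - 4 * (-q.1 / √D) * (-q.2.2 / √D) = (1 : ℝ) := by
    rw [← hg.fst, ← hg.snd, ← hg.trd]
    calc (g 0 0 * g 1 1 + g 0 1 * g 1 0) ^ 2 - 4 * (g 0 0 * g 1 0) * (g 0 1 * g 1 1)
        = g.det ^ 2 := by
          rw [Matrix.det_fin_two]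
          ring
      _ = 1 := by rw [hg.det_eq_one, one_pow]
  field_simp at hdisc
  rw [Real.sq_sqrt (Int.cast_nonneg hD.le)] at hdisc
  have hcast : (q.2.1 : ℝ) ^ 2 - 4 * q.1 * q.2.2 = D := by linarith
  exact_mod_cast hcast

lemma mul_toR (hg : IsScalingMatrix D g q) (γ : Matrix.SpecialLinearGroup (Fin 2) ℤ) :
    IsScalingMatrix D (g * toR γ) (QAct q γ) := by
  have hγ : (γ.1 0 0 : ℝ) * γ.1 1 1 - γ.1 0 1 * γ.1 1 0 = 1 := by
    have := γ.det_coe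
    rw [Matrix.det_fin_two] at this
    exact_mod_cast this
  have hdet := hg.det_eq_one
  rw [Matrix.det_fin_two] at hdet
  constructor
  · simp only [Matrix.det_fin_two, toR, Matrix.mul_apply, Fin.sum_univ_two, Matrix.map_apply]
    linear_combination hdet * (γ.1 0 0 * γ.1 1 1 - γ.1 0 1 * γ.1 1 0 : ℝ) + hγ
  all_goals
    simp only [toR, Matrix.mul_apply, Fin.sum_univ_two, Matrix.map_apply, QAct]
    push_cast
  · linear_combination (γ.1 0 0 : ℝ) ^ 2 * hg.fst + γ.1 0 0 * γ.1 1 0 * hg.snd +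
      (γ.1 1 0 : ℝ) ^ 2 * hg.trd
  · linear_combination 2 * (γ.1 0 0 : ℝ) * γ.1 0 1 * hg.fst +
      (γ.1 0 0 * γ.1 1 1 + γ.1 0 1 * γ.1 1 0) * hg.snd + 2 * (γ.1 1 0 : ℝ) * γ.1 1 1 * hg.trd
  · linear_combination (γ.1 0 1 : ℝ) ^ 2 * hg.fst + γ.1 0 1 * γ.1 1 1 * hg.snd +
      (γ.1 1 1 : ℝ) ^ 2 * hg.trd

lemma moeb_re (hg : IsScalingMatrix D g q) (τ : ℂ) :
    (moeb g τ).re = -(Qell q τ / (√D * Complex.normSq (jfac g τ))) := by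
  rw [_root_.moeb_re, hg.fst, hg.snd, hg.trd, Qell]
  ring

lemma moeb_im (hg : IsScalingMatrix D g q) (τ : ℂ) :
    (moeb g τ).im = τ.im / Complex.normSq (jfac g τ) := by
  rw [_root_.moeb_im, hg.det_eq_one, one_mul]

lemma jfac_ne_zero (hg : IsScalingMatrix D g q) (hτ : τ.im ≠ 0) : jfac g τ ≠ 0 :=
  _root_.jfac_ne_zero (by rw [hg.det_eq_one]; exact one_ne_zero) hτ

lemma jfac_sq_mul_moeb (hg : IsScalingMatrix D g q) (hτ : τ.im ≠ 0) :
    jfac g τ ^ 2 * moeb g τ = -Qval q τ / ((√D : ℝ) : ℂ) := by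
  have hfst : (g 0 0 * g 1 0 : ℂ) = -q.1 / (√D : ℝ) := by exact_mod_cast hg.fst
  have hsnd : (g 0 0 * g 1 1 + g 0 1 * g 1 0 : ℂ) = -q.2.1 / (√D : ℝ) := by exact_mod_cast hg.snd
  have htrd : (g 0 1 * g 1 1 : ℂ) = -q.2.2 / (√D : ℝ) := by exact_mod_cast hg.trd
  calc jfac g τ ^ 2 * moeb g τ = jfac g τ * (g 0 0 * τ + g 0 1) := by
        rw [moeb, ← jfac, pow_two, mul_assoc, mul_div_cancel₀ _ (hg.jfac_ne_zero hτ)]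
    _ = -Qval q τ / ((√D : ℝ) : ℂ) := by
        rw [jfac, Qval]
        linear_combination τ ^ 2 * hfst + τ * hsnd + htrd

lemma sign_moeb_re (hg : IsScalingMatrix D g q) (hD : 0 < D) (hτ : τ.im ≠ 0) :
    Real.sign (moeb g τ).re = -Real.sign (Qell q τ) := by
  rw [hg.moeb_re, Real.sign_neg, sign_div_of_pos _ (mul_pos (Real.sqrt_pos.2 (Int.cast_pos.2 hD))
    (Complex.normSq_pos.2 (hg.jfac_ne_zero hτ)))]

lemma abs_moeb_im_div_re (hg : IsScalingMatrix D g q) (hτ : τ.im ≠ 0) :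
    |(moeb g τ).im / (moeb g τ).re| = √D * |τ.im| / |Qell q τ| := by
  have hj : Complex.normSq (jfac g τ) ≠ 0 := (Complex.normSq_pos.2 (hg.jfac_ne_zero hτ)).ne'
  rw [hg.moeb_im, hg.moeb_re, div_neg, abs_neg, ← abs_of_nonneg (Real.sqrt_nonneg D), ← abs_mul,
    ← abs_div, abs_of_nonneg (Real.sqrt_nonneg D)]
  congr 1
  field_simp

lemma jfac_pow_mul_phiHat {k : ℕ} (hk : 2 ≤ k) (hD : 0 < D) (hg : IsScalingMatrix D g q)
    (hτ : τ.im ≠ 0) :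
    jfac g τ ^ (2 * k - 2) * phiHat k (moeb g τ) =
      (-1) ^ k * ((√D : ℝ) : ℂ)⁻¹ ^ (k - 1) * Fsummand k D τ q := by
  rw [phiHat, Fsummand, hg.sign_moeb_re hD hτ]
  rcases eq_or_ne (Qell q τ) 0 with hell | hell
  · simp [hell]
  rw [psi_eq_phi_arctan hk hD.le (hg.mem_QD hD) hell, hg.abs_moeb_im_div_re hτ]
  have hpow : jfac g τ ^ (2 * k - 2) * moeb g τ ^ (k - 1) =
      (-1) ^ (k - 1) * ((√D : ℝ) : ℂ)⁻¹ ^ (k - 1) * Qval q τ ^ (k - 1) := by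
    rw [show 2 * k - 2 = 2 * (k - 1) by omega, pow_mul, ← mul_pow, hg.jfac_sq_mul_moeb hτ,
      ← mul_pow, ← mul_pow]
    ring
  have hsign : (-1 : ℂ) ^ k = -(-1) ^ (k - 1) := by
    rw [← pow_sub_one_mul (by omega : k ≠ 0), mul_neg_one]
  rw [hsign, Complex.ofReal_neg, mul_neg]
  linear_combination (-(Real.sign (Qell q τ) : ℂ) *
    (phi k (Real.arctan (√D * |τ.im| / |Qell q τ|)) : ℂ)) * hpow

end IsScalingMatrix

/-! ### The orbit of a form and the cosets of its stabilizer -/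

lemma QAct_one (q : ℤ × ℤ × ℤ) : QAct q 1 = q := by
  simp [QAct]

lemma QAct_mul (q : ℤ × ℤ × ℤ) (γ δ : Matrix.SpecialLinearGroup (Fin 2) ℤ) :
    QAct q (γ * δ) = QAct (QAct q γ) δ := by
  ext <;>
    simp only [QAct, Matrix.SpecialLinearGroup.coe_mul, Matrix.mul_apply, Fin.sum_univ_two] <;>
    ring

lemma QAct_mem_QD {D : ℤ} {q : ℤ × ℤ × ℤ} (hq : q ∈ QD D)
    (γ : Matrix.SpecialLinearGroup (Fin 2) ℤ) : QAct q γ ∈ QD D := by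
  have hdet : γ.1 0 0 * γ.1 1 1 - γ.1 0 1 * γ.1 1 0 = 1 := by
    rw [← Matrix.det_fin_two, γ.det_coe]
  calc (QAct q γ).2.1 ^ 2 - 4 * (QAct q γ).1 * (QAct q γ).2.2
      = (q.2.1 ^ 2 - 4 * q.1 * q.2.2) * (γ.1 0 0 * γ.1 1 1 - γ.1 0 1 * γ.1 1 0) ^ 2 := by
        simp only [QAct]
        ring
    _ = D := by rw [hdet, one_pow, mul_one, hq]

lemma exists_stabilizer_mul_eq_iff {q : ℤ × ℤ × ℤ} {γ ρ : Matrix.SpecialLinearGroup (Fin 2) ℤ} :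
    (∃ δ, QAct q δ = q ∧ γ = δ * ρ) ↔ QAct q ρ = QAct q γ := by
  constructor
  · rintro ⟨δ, hδ, rfl⟩
    rw [QAct_mul, hδ]
  · intro h
    refine ⟨γ * ρ⁻¹, ?_, (inv_mul_cancel_right γ ρ).symm⟩
    rw [QAct_mul, ← h, ← QAct_mul, mul_inv_cancel, QAct_one]

lemma bijOn_QAct_orbit {q₀ : ℤ × ℤ × ℤ} {R : Set (Matrix.SpecialLinearGroup (Fin 2) ℤ)}
    (hR : ∀ γ, ∃! ρ, ρ ∈ R ∧ ∃ δ, QAct q₀ δ = q₀ ∧ γ = δ * ρ) :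
    Set.BijOn (QAct q₀) R {q | ∃ γ, QAct q₀ γ = q} := by
  simp only [exists_stabilizer_mul_eq_iff] at hR
  refine ⟨fun ρ _ => ⟨ρ, rfl⟩, fun ρ hρ ρ' hρ' h => ?_, ?_⟩
  · exact (hR ρ').unique ⟨hρ, h⟩ ⟨hρ', rfl⟩
  · rintro _ ⟨γ, rfl⟩
    exact (hR γ).exists

lemma fst_ne_zero_of_mem_QD {D : ℤ} (hD : ¬∃ m : ℤ, m ^ 2 = D) {q : ℤ × ℤ × ℤ}
    (hq : q ∈ QD D) : q.1 ≠ 0 := by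
  intro h
  have hdisc : q.2.1 ^ 2 - 4 * q.1 * q.2.2 = D := hq
  exact hD ⟨q.2.1, by rwa [h, mul_zero, zero_mul, sub_zero] at hdisc⟩

lemma Dpow_half_mul_Dpow {k : ℕ} (hk : 1 ≤ k) {D : ℤ} (hD : 0 < D) :
    Dpow D ((k : ℝ) / 2) * Dpow D (1 / 2 - (k : ℝ)) = ((√D : ℝ) : ℂ)⁻¹ ^ (k - 1) := by
  have hD' : (0 : ℝ) < D := Int.cast_pos.2 hD
  rw [Dpow, Dpow, ← Complex.ofReal_mul, ← Real.rpow_add hD', ← Complex.ofReal_inv,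
    ← Complex.ofReal_pow, Real.sqrt_eq_rpow, ← Real.rpow_neg hD'.le, ← Real.rpow_natCast,
    ← Real.rpow_mul hD'.le, Nat.cast_sub hk]
  congr 2
  push_cast
  ring

lemma choose_mul_pi_mul_Dpow_mul_FA {k : ℕ} (hk : 1 ≤ k) {D : ℤ} (hD : 0 < D)
    (𝒜 : Set (ℤ × ℤ × ℤ)) (τ : ℂ) :
    ((Nat.choose (2 * k - 2) (k - 1) : ℕ) : ℂ) * ((Real.pi : ℝ) : ℂ) * Dpow D ((k : ℝ) / 2) *
        FA k D 𝒜 τ =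
      (-1) ^ k * ((√D : ℝ) : ℂ)⁻¹ ^ (k - 1) * ∑' q : 𝒜, Fsummand k D τ q := by
  have hchoose : ((Nat.choose (2 * k - 2) (k - 1) : ℕ) : ℂ) ≠ 0 :=
    Nat.cast_ne_zero.2 (Nat.choose_pos (by omega)).ne'
  have hpi : ((Real.pi : ℝ) : ℂ) ≠ 0 := Complex.ofReal_ne_zero.2 Real.pi_ne_zero
  rw [FA, ← Dpow_half_mul_Dpow hk hD]
  push_cast
  field_simp

theorem stmt17_general (k : ℕ) (hk : 2 ≤ k) (D : ℤ) (hD : 0 < D)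
    (q₀ : ℤ × ℤ × ℤ) (hq₀ : q₀ ∈ QD D) (ha : q₀.1 ≠ 0)
    (𝒜 : Set (ℤ × ℤ × ℤ))
    (h𝒜 : 𝒜 = {q | ∃ γ : Matrix.SpecialLinearGroup (Fin 2) ℤ, QAct q₀ γ = q})
    (R : Set (Matrix.SpecialLinearGroup (Fin 2) ℤ))
    (hR : ∀ γ : Matrix.SpecialLinearGroup (Fin 2) ℤ,
      ∃! ρ : Matrix.SpecialLinearGroup (Fin 2) ℤ, ρ ∈ R ∧
        ∃ δ : Matrix.SpecialLinearGroup (Fin 2) ℤ, QAct q₀ δ = q₀ ∧ γ = δ * ρ)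
    (τ : ℂ) (hτ : τ.im ≠ 0) :
    Summable (fun ρ : R =>
      jfac (AQ D q₀ * toR (ρ : Matrix.SpecialLinearGroup (Fin 2) ℤ)) τ ^ (2 * k - 2) *
        phiHat k (moeb (AQ D q₀ * toR (ρ : Matrix.SpecialLinearGroup (Fin 2) ℤ)) τ)) ∧
    ∑' ρ : R,
        jfac (AQ D q₀ * toR (ρ : Matrix.SpecialLinearGroup (Fin 2) ℤ)) τ ^ (2 * k - 2) *
          phiHat k (moeb (AQ D q₀ * toR (ρ : Matrix.SpecialLinearGroup (Fin 2) ℤ)) τ)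
      = ((Nat.choose (2 * k - 2) (k - 1) : ℕ) : ℂ) * ((Real.pi : ℝ) : ℂ) *
          Dpow D ((k : ℝ) / 2) * FA k D 𝒜 τ := by
  have hterm (γ : Matrix.SpecialLinearGroup (Fin 2) ℤ) :
      jfac (AQ D q₀ * toR γ) τ ^ (2 * k - 2) * phiHat k (moeb (AQ D q₀ * toR γ) τ) =
        (-1) ^ k * ((√D : ℝ) : ℂ)⁻¹ ^ (k - 1) * Fsummand k D τ (QAct q₀ γ) :=
    ((isScalingMatrix_AQ hD hq₀ ha).mul_toR γ).jfac_pow_mul_phiHat hk hD hτ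
  have hsub : 𝒜 ⊆ QD D := by
    rw [h𝒜]
    rintro _ ⟨γ, rfl⟩
    exact QAct_mem_QD hq₀ γ
  have hsum : Summable fun q : 𝒜 => Fsummand k D τ q := by
    simpa only [Function.comp_def, Set.coe_inclusion] using
      (summable_Fsummand hk hD hτ).comp_injective (Set.inclusion_injective hsub)
  have horbit : Set.BijOn (QAct q₀) R 𝒜 := h𝒜 ▸ bijOn_QAct_orbit hR
  set e := horbit.equiv (QAct q₀)
  have he (ρ : R) : QAct q₀ ρ = e ρ := rfl
  simp only [hterm, he]
  refine ⟨(e.summable_iff.2 hsum).mul_left _, ?_⟩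
  rw [tsum_mul_left, choose_mul_pi_mul_Dpow_mul_FA (by omega) hD,
    e.tsum_eq fun q => Fsummand k D τ q]

theorem stmt17 (k : ℕ) (hk : 2 ≤ k) (D : ℤ) (hD : 0 < D)
    (hD4 : D % 4 = 0 ∨ D % 4 = 1) (hDsq : ¬∃ m : ℤ, m ^ 2 = D)
    (q₀ : ℤ × ℤ × ℤ) (hq₀ : q₀ ∈ QD D)
    (𝒜 : Set (ℤ × ℤ × ℤ))
    (h𝒜 : 𝒜 = {q | ∃ γ : Matrix.SpecialLinearGroup (Fin 2) ℤ, QAct q₀ γ = q})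
    (R : Set (Matrix.SpecialLinearGroup (Fin 2) ℤ))
    (hR : ∀ γ : Matrix.SpecialLinearGroup (Fin 2) ℤ,
      ∃! ρ : Matrix.SpecialLinearGroup (Fin 2) ℤ, ρ ∈ R ∧
        ∃ δ : Matrix.SpecialLinearGroup (Fin 2) ℤ, QAct q₀ δ = q₀ ∧ γ = δ * ρ)
    (τ : ℂ) (hτ : 0 < τ.im) :
    Summable (fun ρ : R =>
      jfac (AQ D q₀ * toR (ρ : Matrix.SpecialLinearGroup (Fin 2) ℤ)) τ ^ (2 * k - 2) *
        phiHat k (moeb (AQ D q₀ * toR (ρ : Matrix.SpecialLinearGroup (Fin 2) ℤ)) τ)) ∧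
    ∑' ρ : R,
        jfac (AQ D q₀ * toR (ρ : Matrix.SpecialLinearGroup (Fin 2) ℤ)) τ ^ (2 * k - 2) *
          phiHat k (moeb (AQ D q₀ * toR (ρ : Matrix.SpecialLinearGroup (Fin 2) ℤ)) τ)
      = ((Nat.choose (2 * k - 2) (k - 1) : ℕ) : ℂ) * ((Real.pi : ℝ) : ℂ) *
          Dpow D ((k : ℝ) / 2) * FA k D 𝒜 τ :=
  stmt17_general k hk D hD q₀ hq₀ (fst_ne_zero_of_mem_QD hDsq hq₀) 𝒜 h𝒜 R hR τ hτ.ne'
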